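/- For all natural numbers j < n and all k, l < ω, the equivalence Q_j^l(⟨n⟩^k⊤) ↔ (⟨j⟩⟨n⟩^k)^l⊤ is derivable in GLP_ω, where ⟨n⟩^k⊤ denotes k iterated applications of ⟨n⟩ to ⊤ and (⟨j⟩⟨n⟩^k)^l⊤ denotes l iterated applications of the block ⟨j⟩⟨n⟩^k to ⊤. -/

import Mathlib

/-- Formulas of polymodal provability logic GLP: propositional variables, ⊤,
Boolean connectives, and a modality `[ξ]` for each ordinal `ξ`. -/
inductive GLPFormula : Type 1 where
  | var : ℕ → GLPFormula
  | top : GLPFormula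
  | neg : GLPFormula → GLPFormula
  | and : GLPFormula → GLPFormula → GLPFormula
  | imp : GLPFormula → GLPFormula → GLPFormula
  | box : Ordinal → GLPFormula → GLPFormula

namespace GLPFormula

/-- `⟨ξ⟩φ` abbreviates `¬[ξ]¬φ`. -/
def dia (ξ : Ordinal) (φ : GLPFormula) : GLPFormula := neg (box ξ (neg φ))

/-- Biconditional, defined from the other connectives. -/
def biimp (φ ψ : GLPFormula) : GLPFormula := and (imp φ ψ) (imp ψ φ)

/-- The set of ordinals occurring as modality indices in a formula. -/
def mods : GLPFormula → Set Ordinal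
  | var _ => ∅
  | top => ∅
  | neg φ => mods φ
  | and φ ψ => mods φ ∪ mods ψ
  | imp φ ψ => mods φ ∪ mods ψ
  | box ξ φ => insert ξ (mods φ)

end GLPFormula

/-- A propositional tautology: true under every Boolean valuation that respects
the Boolean connectives (variables and boxed formulas are treated as atoms). -/
def IsTautology (φ : GLPFormula) : Prop :=
  ∀ v : GLPFormula → Bool,
    v GLPFormula.top = true →
    (∀ ψ, v ψ.neg = !v ψ) →
    (∀ ψ χ, v (ψ.and χ) = (v ψ && v χ)) →
    (∀ ψ χ, v (ψ.imp χ) = (!v ψ || v χ)) →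
    v φ = true

/-- Derivability in GLP, with modality indices restricted to the set `S`
(`S = Set.univ` gives full GLP; `S = Set.Iio ω` gives GLP_ω). -/
inductive GLPProof (S : Set Ordinal) : GLPFormula → Prop where
  | taut {φ} : φ.mods ⊆ S → IsTautology φ → GLPProof S φ
  | distr {ξ φ ψ} : ξ ∈ S → φ.mods ⊆ S → ψ.mods ⊆ S →
      GLPProof S ((GLPFormula.box ξ (φ.imp ψ)).imp
        ((GLPFormula.box ξ φ).imp (GLPFormula.box ξ ψ)))
  | trans {ξ φ} : ξ ∈ S → φ.mods ⊆ S →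
      GLPProof S ((GLPFormula.box ξ φ).imp (GLPFormula.box ξ (GLPFormula.box ξ φ)))
  | lob {ξ φ} : ξ ∈ S → φ.mods ⊆ S →
      GLPProof S ((GLPFormula.box ξ ((GLPFormula.box ξ φ).imp φ)).imp (GLPFormula.box ξ φ))
  | negIntro {ξ ζ φ} : ξ < ζ → ξ ∈ S → ζ ∈ S → φ.mods ⊆ S →
      GLPProof S ((GLPFormula.dia ζ φ).imp (GLPFormula.dia ξ φ))
  | mono {ξ ζ φ} : ξ < ζ → ξ ∈ S → ζ ∈ S → φ.mods ⊆ S →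
      GLPProof S ((GLPFormula.dia ξ φ).imp (GLPFormula.box ζ (GLPFormula.dia ξ φ)))
  | mp {φ ψ} : GLPProof S (φ.imp ψ) → GLPProof S φ → GLPProof S ψ
  | nec {ξ φ} : ξ ∈ S → GLPProof S φ → GLPProof S (GLPFormula.box ξ φ)

/-- Derivability in full GLP (modalities indexed by all ordinals). -/
def GLPProves (φ : GLPFormula) : Prop := GLPProof Set.univ φ

/-- Derivability in GLP_ω (modalities indexed by natural numbers). -/
def GLPomegaProves (φ : GLPFormula) : Prop := GLPProof (Set.Iio Ordinal.omega0) φ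

/-- A GLP_ω formula: all modality indices are below ω. -/
def IsOmegaFormula (φ : GLPFormula) : Prop := φ.mods ⊆ Set.Iio Ordinal.omega0

/-- Conjunction of a finite list of formulas. -/
def listConj : List GLPFormula → GLPFormula
  | [] => GLPFormula.top
  | φ :: l => φ.and (listConj l)

/-- `SetProves S τ χ`: the set `τ` proves `χ`, i.e. `ψ₁ ∧ … ∧ ψₘ → χ` is
derivable for some finite list of members of `τ`. -/
def SetProves (S : Set Ordinal) (τ : Set GLPFormula) (χ : GLPFormula) : Prop :=
  ∃ l : List GLPFormula, (∀ ψ ∈ l, ψ ∈ τ) ∧ GLPProof S ((listConj l).imp χ)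

/-- The iterated consistency formulas: `Q n 0 φ = ⊤`, `Q n (k+1) φ = ⟨n⟩(φ ∧ Q n k φ)`. -/
def Q (n : Ordinal) : ℕ → GLPFormula → GLPFormula
  | 0, _ => GLPFormula.top
  | k + 1, φ => GLPFormula.dia n ((GLPFormula.and φ (Q n k φ)))

/-- `diaPow n k φ` is `⟨n⟩^k φ`, `k` iterated applications of `⟨n⟩`. -/
def diaPow (n : Ordinal) : ℕ → GLPFormula → GLPFormula
  | 0, φ => φ
  | k + 1, φ => GLPFormula.dia n (diaPow n k φ)

/-- The formula corresponding to a worm, given as its list of modality indices: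
`[] ↦ ⊤` and `γ :: A ↦ ⟨γ⟩A`. -/
def wormFormula : List Ordinal → GLPFormula
  | [] => GLPFormula.top
  | γ :: A => GLPFormula.dia γ (wormFormula A)

/-- The generalized `Q`-formula: `Q(⊤,φ) = ⊤`, `Q(⟨γ⟩A, φ) = ⟨γ⟩(φ ∧ Q(A,φ))`. -/
def QWorm : List Ordinal → GLPFormula → GLPFormula
  | [], _ => GLPFormula.top
  | γ :: A, φ => GLPFormula.dia γ (GLPFormula.and φ (QWorm A φ))

/-- `blockIter j n k l` is `(⟨j⟩⟨n⟩^k)^l⊤`: `l` iterated applications of the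
block `⟨j⟩⟨n⟩^k` to `⊤`. -/
def blockIter (j n : Ordinal) (k : ℕ) : ℕ → GLPFormula
  | 0 => GLPFormula.top
  | l + 1 => GLPFormula.dia j (diaPow n k (blockIter j n k l))

/-! For `j < n` the formula `⟨j⟩ψ` passes freely in and out of the scope of `⟨n⟩`:
`⟨n⟩(φ ∧ ⟨j⟩ψ)` and `⟨n⟩φ ∧ ⟨j⟩ψ` are interderivable, since `⟨j⟩ψ` implies `[n]⟨j⟩ψ` and
`⟨n⟩⟨j⟩ψ` implies `⟨j⟩⟨j⟩ψ`, hence `⟨j⟩ψ`. Iterating, `⟨n⟩^k⊤ ∧ ⟨j⟩ψ` is interderivable with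
`⟨n⟩^k⟨j⟩ψ`, which turns each conjunction in `Q_j^l(⟨n⟩^k⊤)` into a block `⟨n⟩^k`, from the
innermost one outwards. -/

namespace GLPFormula

variable {S : Set Ordinal.{0}} {ξ : Ordinal.{0}} {φ ψ : GLPFormula}

@[simp] theorem mods_top_subset : top.mods ⊆ S := Set.empty_subset S

@[simp] theorem mods_neg_subset : φ.neg.mods ⊆ S ↔ φ.mods ⊆ S := Iff.rfl

@[simp] theorem mods_and_subset : (φ.and ψ).mods ⊆ S ↔ φ.mods ⊆ S ∧ ψ.mods ⊆ S :=
  Set.union_subset_iff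

@[simp] theorem mods_imp_subset : (φ.imp ψ).mods ⊆ S ↔ φ.mods ⊆ S ∧ ψ.mods ⊆ S :=
  Set.union_subset_iff

@[simp] theorem mods_biimp_subset : (φ.biimp ψ).mods ⊆ S ↔ φ.mods ⊆ S ∧ ψ.mods ⊆ S := by
  simp only [biimp, mods_and_subset, mods_imp_subset]
  tauto

@[simp] theorem mods_box_subset : (box ξ φ).mods ⊆ S ↔ ξ ∈ S ∧ φ.mods ⊆ S :=
  Set.insert_subset_iff

@[simp] theorem mods_dia_subset : (dia ξ φ).mods ⊆ S ↔ ξ ∈ S ∧ φ.mods ⊆ S :=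
  mods_box_subset

end GLPFormula

section

open GLPFormula

variable {S : Set Ordinal.{0}} {ξ j n : Ordinal.{0}} {φ ψ χ : GLPFormula}

theorem mods_diaPow_subset (hn : n ∈ S) (hφ : φ.mods ⊆ S) (k : ℕ) : (diaPow n k φ).mods ⊆ S := by
  induction k with
  | zero => exact hφ
  | succ k ih => exact mods_dia_subset.2 ⟨hn, ih⟩

theorem mods_blockIter_subset (hj : j ∈ S) (hn : n ∈ S) (k l : ℕ) :
    (blockIter j n k l).mods ⊆ S := by
  induction l with
  | zero => exact mods_top_subset
  | succ l ih => exact mods_dia_subset.2 ⟨hj, mods_diaPow_subset hn ih k⟩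

/-- A truth assignment to all formulas that respects the Boolean connectives and treats variables
and boxed formulas as atoms. It takes values in `Prop`, unlike the valuations in `IsTautology`, so
that tautologies can be checked by propositional reasoning. -/
structure IsValuation (v : GLPFormula → Prop) : Prop where
  top : v top
  neg (φ : GLPFormula) : v φ.neg ↔ ¬v φ
  and (φ ψ : GLPFormula) : v (φ.and ψ) ↔ v φ ∧ v ψ
  imp (φ ψ : GLPFormula) : v (φ.imp ψ) ↔ (v φ → v ψ)

theorem IsValuation.biimp {v : GLPFormula → Prop} (hv : IsValuation v) (φ ψ : GLPFormula) :
    v (φ.biimp ψ) ↔ (v φ ↔ v ψ) := by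
  rw [GLPFormula.biimp, hv.and, hv.imp, hv.imp, ← iff_def]

theorem IsTautology.of_forall_isValuation (h : ∀ v, IsValuation v → v φ) : IsTautology φ :=
  fun v htop hneg hand himp =>
    h (v · = true)
      { top := htop
        neg := by simp [hneg]
        and := by simp [hand]
        imp := by simp [himp, imp_iff_not_or] }

namespace GLPProof

theorem mods_subset (h : GLPProof S φ) : φ.mods ⊆ S := by
  induction h with
  | taut hφ _ => exact hφ
  | mp _ _ ihimp _ => exact (mods_imp_subset.1 ihimp).2
  | nec hξ _ ih => exact mods_box_subset.2 ⟨hξ, ih⟩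
  | _ => simp [*]

theorem of_forall_isValuation (hφ : φ.mods ⊆ S) (h : ∀ v, IsValuation v → v φ) : GLPProof S φ :=
  taut hφ (.of_forall_isValuation h)

end GLPProof

/-- The local consequence relation: `φ` entails `ψ` when the implication `φ → ψ` is derivable
with modalities restricted to `S`. Both sides then only use modalities in `S`. -/
def Entails (S : Set Ordinal) (φ ψ : GLPFormula) : Prop := GLPProof S (φ.imp ψ)

/-- Provable equivalence of formulas, with modalities restricted to `S`. -/
def Interderivable (S : Set Ordinal) (φ ψ : GLPFormula) : Prop := GLPProof S (φ.biimp ψ)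

namespace Entails

theorem left_mods_subset (h : Entails S φ ψ) : φ.mods ⊆ S :=
  (mods_imp_subset.1 h.mods_subset).1

theorem right_mods_subset (h : Entails S φ ψ) : ψ.mods ⊆ S :=
  (mods_imp_subset.1 h.mods_subset).2

theorem trans (hφψ : Entails S φ ψ) (hψχ : Entails S ψ χ) : Entails S φ χ := by
  have h : GLPProof S ((φ.imp ψ).imp ((ψ.imp χ).imp (φ.imp χ))) :=
    .of_forall_isValuation
      (by simp [hφψ.left_mods_subset, hψχ.left_mods_subset, hψχ.right_mods_subset])
      fun v hv => by simp only [hv.imp]; tauto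
  exact (h.mp hφψ).mp hψχ

instance : Trans (Entails S) (Entails S) (Entails S) := ⟨trans⟩

theorem and_left (hφ : φ.mods ⊆ S) (hψ : ψ.mods ⊆ S) : Entails S (φ.and ψ) φ :=
  .of_forall_isValuation (by simp [hφ, hψ]) fun v hv => by simp only [hv.imp, hv.and]; tauto

theorem and_right (hφ : φ.mods ⊆ S) (hψ : ψ.mods ⊆ S) : Entails S (φ.and ψ) ψ :=
  .of_forall_isValuation (by simp [hφ, hψ]) fun v hv => by simp only [hv.imp, hv.and]; tauto

theorem and_intro (hψ : Entails S φ ψ) (hχ : Entails S φ χ) : Entails S φ (ψ.and χ) := by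
  have h : GLPProof S ((φ.imp ψ).imp ((φ.imp χ).imp (φ.imp (ψ.and χ)))) :=
    .of_forall_isValuation
      (by simp [hψ.left_mods_subset, hψ.right_mods_subset, hχ.right_mods_subset])
      fun v hv => by simp only [hv.imp, hv.and]; tauto
  exact (h.mp hψ).mp hχ

theorem and_mono_right (hφ : φ.mods ⊆ S) (h : Entails S ψ χ) :
    Entails S (φ.and ψ) (φ.and χ) :=
  and_intro (and_left hφ h.left_mods_subset) ((and_right hφ h.left_mods_subset).trans h)

theorem neg_mono (h : Entails S φ ψ) : Entails S ψ.neg φ.neg := by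
  have hcontra : GLPProof S ((φ.imp ψ).imp (ψ.neg.imp φ.neg)) :=
    .of_forall_isValuation (by simp [h.left_mods_subset, h.right_mods_subset])
      fun v hv => by simp only [hv.imp, hv.neg]; tauto
  exact hcontra.mp h

theorem neg_neg_intro (hφ : φ.mods ⊆ S) : Entails S φ φ.neg.neg :=
  .of_forall_isValuation (by simp [hφ]) fun v hv => by simp only [hv.imp, hv.neg]; tauto

theorem box_mono (hξ : ξ ∈ S) (h : Entails S φ ψ) : Entails S (box ξ φ) (box ξ ψ) :=
  .mp (.distr hξ h.left_mods_subset h.right_mods_subset) (.nec hξ h)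

theorem dia_mono (hξ : ξ ∈ S) (h : Entails S φ ψ) : Entails S (dia ξ φ) (dia ξ ψ) :=
  (h.neg_mono.box_mono hξ).neg_mono

theorem dia_dia (hξ : ξ ∈ S) (hφ : φ.mods ⊆ S) : Entails S (dia ξ (dia ξ φ)) (dia ξ φ) := by
  have hboxneg : (box ξ φ.neg).mods ⊆ S := mods_box_subset.2 ⟨hξ, mods_neg_subset.2 hφ⟩
  have hbox : Entails S (box ξ φ.neg) (box ξ (dia ξ φ).neg) := calc
    Entails S (box ξ φ.neg) (box ξ (box ξ φ.neg)) :=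
      GLPProof.trans hξ (mods_neg_subset.2 hφ)
    Entails S _ (box ξ (dia ξ φ).neg) := (neg_neg_intro hboxneg).box_mono hξ
  exact hbox.neg_mono

theorem dia_and_box (hξ : ξ ∈ S) (hφ : φ.mods ⊆ S) (hψ : ψ.mods ⊆ S) :
    Entails S ((dia ξ φ).and (box ξ ψ)) (dia ξ (φ.and ψ)) := by
  have hprop : Entails S ψ ((φ.and ψ).neg.imp φ.neg) :=
    .of_forall_isValuation (by simp [hφ, hψ]) fun v hv => by
      simp only [hv.imp, hv.and, hv.neg]; tauto
  have hbox : Entails S (box ξ ψ) ((box ξ (φ.and ψ).neg).imp (box ξ φ.neg)) := calc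
    Entails S (box ξ ψ) (box ξ ((φ.and ψ).neg.imp φ.neg)) := hprop.box_mono hξ
    Entails S _ ((box ξ (φ.and ψ).neg).imp (box ξ φ.neg)) := .distr hξ (by simp [hφ, hψ]) hφ
  have hcontra : GLPProof S (((box ξ ψ).imp ((box ξ (φ.and ψ).neg).imp (box ξ φ.neg))).imp
      (((dia ξ φ).and (box ξ ψ)).imp (dia ξ (φ.and ψ)))) :=
    .of_forall_isValuation (by simp [hξ, hφ, hψ])
      fun v hv => by simp only [dia, hv.imp, hv.and, hv.neg]; tauto
  exact hcontra.mp hbox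

end Entails

namespace Interderivable

theorem left_mods_subset (h : Interderivable S φ ψ) : φ.mods ⊆ S :=
  (mods_biimp_subset.1 h.mods_subset).1

theorem right_mods_subset (h : Interderivable S φ ψ) : ψ.mods ⊆ S :=
  (mods_biimp_subset.1 h.mods_subset).2

theorem mp (h : Interderivable S φ ψ) : Entails S φ ψ :=
  .mp (Entails.and_left (mods_imp_subset.2 ⟨h.left_mods_subset, h.right_mods_subset⟩)
    (mods_imp_subset.2 ⟨h.right_mods_subset, h.left_mods_subset⟩)) h

theorem mpr (h : Interderivable S φ ψ) : Entails S ψ φ :=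
  .mp (Entails.and_right (mods_imp_subset.2 ⟨h.left_mods_subset, h.right_mods_subset⟩)
    (mods_imp_subset.2 ⟨h.right_mods_subset, h.left_mods_subset⟩)) h

theorem intro (hφψ : Entails S φ ψ) (hψφ : Entails S ψ φ) : Interderivable S φ ψ := by
  have h : GLPProof S ((φ.imp ψ).imp ((ψ.imp φ).imp (φ.biimp ψ))) :=
    .of_forall_isValuation (by simp [hφψ.left_mods_subset, hφψ.right_mods_subset])
      fun v hv => by simp only [hv.imp, hv.biimp]; tauto
  exact (h.mp hφψ).mp hψφ

theorem refl (hφ : φ.mods ⊆ S) : Interderivable S φ φ :=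
  .of_forall_isValuation (by simp [hφ]) fun v hv => by rw [hv.biimp]

theorem symm (h : Interderivable S φ ψ) : Interderivable S ψ φ := intro h.mpr h.mp

theorem trans (hφψ : Interderivable S φ ψ) (hψχ : Interderivable S ψ χ) :
    Interderivable S φ χ :=
  intro (hφψ.mp.trans hψχ.mp) (hψχ.mpr.trans hφψ.mpr)

instance : Trans (Interderivable S) (Interderivable S) (Interderivable S) := ⟨trans⟩

theorem and_top (hφ : φ.mods ⊆ S) : Interderivable S (φ.and top) φ :=
  .of_forall_isValuation (by simp [hφ]) fun v hv => by simp [hv.biimp, hv.and, hv.top]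

theorem top_and (hφ : φ.mods ⊆ S) : Interderivable S (top.and φ) φ :=
  .of_forall_isValuation (by simp [hφ]) fun v hv => by simp [hv.biimp, hv.and, hv.top]

theorem and_congr_right (hφ : φ.mods ⊆ S) (h : Interderivable S ψ χ) :
    Interderivable S (φ.and ψ) (φ.and χ) :=
  intro (h.mp.and_mono_right hφ) (h.mpr.and_mono_right hφ)

theorem dia_congr (hξ : ξ ∈ S) (h : Interderivable S φ ψ) :
    Interderivable S (dia ξ φ) (dia ξ ψ) :=
  intro (h.mp.dia_mono hξ) (h.mpr.dia_mono hξ)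

theorem diaPow_congr (hn : n ∈ S) (h : Interderivable S φ ψ) (k : ℕ) :
    Interderivable S (diaPow n k φ) (diaPow n k ψ) := by
  induction k with
  | zero => exact h
  | succ k ih => exact dia_congr hn ih

theorem dia_and_dia (hj : j ∈ S) (hn : n ∈ S) (hjn : j < n) (hφ : φ.mods ⊆ S)
    (hψ : ψ.mods ⊆ S) :
    Interderivable S (dia n (φ.and (dia j ψ))) ((dia n φ).and (dia j ψ)) := by
  have hjψ : (dia j ψ).mods ⊆ S := mods_dia_subset.2 ⟨hj, hψ⟩
  have hnφ : (dia n φ).mods ⊆ S := mods_dia_subset.2 ⟨hn, hφ⟩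
  have outer_dia : Entails S (dia n (φ.and (dia j ψ))) (dia n φ) :=
    (Entails.and_left hφ hjψ).dia_mono hn
  have inner_dia : Entails S (dia n (φ.and (dia j ψ))) (dia j ψ) := calc
    Entails S (dia n (φ.and (dia j ψ))) (dia n (dia j ψ)) := (Entails.and_right hφ hjψ).dia_mono hn
    Entails S _ (dia j (dia j ψ)) := .negIntro hjn hj hn hjψ
    Entails S _ (dia j ψ) := .dia_dia hj hψ
  have push_dia : Entails S ((dia n φ).and (dia j ψ)) (dia n (φ.and (dia j ψ))) := calc
    Entails S ((dia n φ).and (dia j ψ)) ((dia n φ).and (box n (dia j ψ))) :=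
      .and_mono_right hnφ (.mono hjn hj hn hψ)
    Entails S _ (dia n (φ.and (dia j ψ))) := .dia_and_box hn hφ hjψ
  exact intro (outer_dia.and_intro inner_dia) push_dia

theorem diaPow_and_dia (hj : j ∈ S) (hn : n ∈ S) (hjn : j < n) (hφ : φ.mods ⊆ S)
    (hψ : ψ.mods ⊆ S) (k : ℕ) :
    Interderivable S (diaPow n k (φ.and (dia j ψ))) ((diaPow n k φ).and (dia j ψ)) := by
  induction k with
  | zero => exact refl (mods_and_subset.2 ⟨hφ, mods_dia_subset.2 ⟨hj, hψ⟩⟩)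
  | succ k ih => calc
      Interderivable S (dia n (diaPow n k (φ.and (dia j ψ))))
          (dia n ((diaPow n k φ).and (dia j ψ))) := dia_congr hn ih
      Interderivable S _ ((dia n (diaPow n k φ)).and (dia j ψ)) :=
        dia_and_dia hj hn hjn (mods_diaPow_subset hn hφ k) hψ

theorem diaPow_top_and_dia (hj : j ∈ S) (hn : n ∈ S) (hjn : j < n) (hψ : ψ.mods ⊆ S) (k : ℕ) :
    Interderivable S ((diaPow n k top).and (dia j ψ)) (diaPow n k (dia j ψ)) := calc
  Interderivable S ((diaPow n k top).and (dia j ψ)) (diaPow n k (top.and (dia j ψ))) :=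
    (diaPow_and_dia hj hn hjn mods_top_subset hψ k).symm
  Interderivable S _ (diaPow n k (dia j ψ)) :=
    diaPow_congr hn (top_and (mods_dia_subset.2 ⟨hj, hψ⟩)) k

theorem diaPow_top_and_blockIter (hj : j ∈ S) (hn : n ∈ S) (hjn : j < n) (k l : ℕ) :
    Interderivable S ((diaPow n k top).and (blockIter j n k l))
      (diaPow n k (blockIter j n k l)) := by
  cases l with
  | zero => exact and_top (mods_diaPow_subset hn mods_top_subset k)
  | succ l =>
    exact diaPow_top_and_dia hj hn hjn
      (mods_diaPow_subset hn (mods_blockIter_subset hj hn k l) k) k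

end Interderivable

theorem Q_of_iterated_dia_iff_block_general (hj : j ∈ S) (hn : n ∈ S) (hjn : j < n) (k l : ℕ) :
    GLPProof S ((Q j l (diaPow n k top)).biimp (blockIter j n k l)) := by
  change Interderivable S (Q j l (diaPow n k top)) (blockIter j n k l)
  induction l with
  | zero => exact .refl mods_top_subset
  | succ l ih => calc
      Interderivable S (dia j ((diaPow n k top).and (Q j l (diaPow n k top))))
          (dia j ((diaPow n k top).and (blockIter j n k l))) :=
        .dia_congr hj (.and_congr_right (mods_diaPow_subset hn mods_top_subset k) ih)
      Interderivable S _ (dia j (diaPow n k (blockIter j n k l))) :=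
        .dia_congr hj (.diaPow_top_and_blockIter hj hn hjn k l)

end

/-- For `j < n`, `Q_j^l(⟨n⟩^k⊤) ↔ (⟨j⟩⟨n⟩^k)^l⊤` is derivable in GLP_ω. -/
theorem Q_of_iterated_dia_iff_block (j n : ℕ) (hjn : j < n) (k l : ℕ) :
    GLPomegaProves ((Q (j : Ordinal) l (diaPow (n : Ordinal) k GLPFormula.top)).biimp
      (blockIter (j : Ordinal) (n : Ordinal) k l)) :=
  Q_of_iterated_dia_iff_block_general (Ordinal.natCast_lt_omega0 j) (Ordinal.natCast_lt_omega0 n)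
    (Nat.cast_lt.mpr hjn) k l
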